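/- arXiv:1902.10607 — 4 statements merged into one kernel-verified Lean document; each statement's English description precedes it below -/
import Mathlib

section
/- Suppose (d₂ ≥ 0 and d₄ > 0) or (d₂ > 0 and d₄ ≥ 0). Then ξ > 0. -/
/-- Null impedance rendering: `(d₂ ≥ 0 ∧ d₄ > 0) ∨ (d₂ > 0 ∧ d₄ ≥ 0)` implies `ξ > 0`,
where `α = Pm·It + Pt·Im`, `γ = K·Pm·Pt + Im`,
`ξ = K·(α·(Pm+b)·(K+γ) − Im·It·(Pm+b)² − J·K·α²)`,
`d₂ = K²·(Pt·Im² − b·It·Im)` and `d₄ = K²·((Pm+b)·(1+Pm·Pt) − J·α)`. -/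
theorem null_impedance_d2_d4_implies_stability
    (J b K Pm Im Pt It : ℝ)
    (hJ : 0 < J) (hb : 0 < b) (hK : 0 < K)
    (hPm : 0 < Pm) (hIm : 0 < Im) (hPt : 0 < Pt) (hIt : 0 < It)
    (hd : (0 ≤ K ^ 2 * (Pt * Im ^ 2 - b * It * Im) ∧
            0 < K ^ 2 * ((Pm + b) * (1 + Pm * Pt) - J * (Pm * It + Pt * Im))) ∨
          (0 < K ^ 2 * (Pt * Im ^ 2 - b * It * Im) ∧
            0 ≤ K ^ 2 * ((Pm + b) * (1 + Pm * Pt) - J * (Pm * It + Pt * Im)))) :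
    0 < K * ((Pm * It + Pt * Im) * (Pm + b) * (K + (K * Pm * Pt + Im)) -
        Im * It * (Pm + b) ^ 2 - J * K * (Pm * It + Pt * Im) ^ 2) := by
  -- The decomposition `ξ = α * d₄ + ((Pm + b) / K) * d₂`, whose two coefficients are positive.
  have key : K * ((Pm * It + Pt * Im) * (Pm + b) * (K + (K * Pm * Pt + Im)) -
        Im * It * (Pm + b) ^ 2 - J * K * (Pm * It + Pt * Im) ^ 2) =
      (Pm * It + Pt * Im) *
          (K ^ 2 * ((Pm + b) * (1 + Pm * Pt) - J * (Pm * It + Pt * Im))) +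
        (Pm + b) / K * (K ^ 2 * (Pt * Im ^ 2 - b * It * Im)) := by
    field_simp
    ring
  have hα : 0 < Pm * It + Pt * Im := by positivity
  have hc : 0 < (Pm + b) / K := by positivity
  rw [key]
  rcases hd with ⟨h2, h4⟩ | ⟨h2, h4⟩
  · exact add_pos_of_pos_of_nonneg (mul_pos hα h4) (mul_nonneg hc.le h2)
  · exact add_pos_of_nonneg_of_pos (mul_nonneg hα.le h4) (mul_pos hc h2)
end

section
/- The three conditions ξ > 0, d₂ ≥ 0, and d₄ ≥ 0 hold simultaneously if and only if either [J < (P_m+b)·(1+P_m·P_t)/(P_m·I_t+P_t·I_m) and b ≤ P_t·I_m/I_t] or [J ≤ (P_m+b)·(1+P_m·P_t)/(P_m·I_t+P_t·I_m) and b < P_t·I_m/I_t]. -/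
/-!
Put `α = Pm * It + Pt * Im`, `u = (Pm + b) * (1 + Pm * Pt) - J * α` and `v = Pt * Im - b * It`.
Since `α - It * (Pm + b) = v`, the first quantity factors as
`ξ = K * (K * α * u + (Pm + b) * Im * v)`, while `d₂ = K ^ 2 * Im * v` and `d₄ = K ^ 2 * u`.
All coefficients of `u` and `v` are positive, so the three conditions say that `u` and `v` are
nonnegative and not both zero, which is the right-hand side after clearing denominators.
-/

/-- A positive combination of `u, v ≥ 0` is positive exactly when one of them is. -/
lemma pos_combination_iff {p q u v : ℝ} (hp : 0 < p) (hq : 0 < q) :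
    (0 < p * u + q * v ∧ 0 ≤ v ∧ 0 ≤ u) ↔ ((0 < u ∧ 0 ≤ v) ∨ (0 ≤ u ∧ 0 < v)) := by
  constructor
  · rintro ⟨h, hv, hu⟩
    rcases hu.eq_or_lt with rfl | hu'
    · right
      refine ⟨le_rfl, ?_⟩
      rw [mul_zero, zero_add] at h
      exact pos_of_mul_pos_right h hq.le
    · exact Or.inl ⟨hu', hv⟩
  · rintro (⟨hu, hv⟩ | ⟨hu, hv⟩)
    · exact ⟨by positivity, hv, hu.le⟩
    · exact ⟨by positivity, hv.le, hu⟩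

/-- Necessary and sufficient conditions for passive null impedance rendering:
`ξ > 0 ∧ d₂ ≥ 0 ∧ d₄ ≥ 0` holds iff
`[J < (Pm+b)(1+PmPt)/(PmIt+PtIm) ∧ b ≤ PtIm/It] ∨ [J ≤ (Pm+b)(1+PmPt)/(PmIt+PtIm) ∧ b < PtIm/It]`. -/
theorem null_impedance_passivity_iff
    (J b K Pm Im Pt It : ℝ)
    (hJ : 0 < J) (hb : 0 < b) (hK : 0 < K)
    (hPm : 0 < Pm) (hIm : 0 < Im) (hPt : 0 < Pt) (hIt : 0 < It) :
    (0 < K * ((Pm * It + Pt * Im) * (Pm + b) * (K + (K * Pm * Pt + Im)) -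
          Im * It * (Pm + b) ^ 2 - J * K * (Pm * It + Pt * Im) ^ 2) ∧
      0 ≤ K ^ 2 * (Pt * Im ^ 2 - b * It * Im) ∧
      0 ≤ K ^ 2 * ((Pm + b) * (1 + Pm * Pt) - J * (Pm * It + Pt * Im))) ↔
    ((J < (Pm + b) * (1 + Pm * Pt) / (Pm * It + Pt * Im) ∧ b ≤ Pt * Im / It) ∨
      (J ≤ (Pm + b) * (1 + Pm * Pt) / (Pm * It + Pt * Im) ∧ b < Pt * Im / It)) := by
  have hα : 0 < Pm * It + Pt * Im := by positivity
  have hp : 0 < K * (Pm * It + Pt * Im) := by positivity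
  have hq : 0 < (Pm + b) * Im := by positivity
  have hξ : (Pm * It + Pt * Im) * (Pm + b) * (K + (K * Pm * Pt + Im)) -
      Im * It * (Pm + b) ^ 2 - J * K * (Pm * It + Pt * Im) ^ 2 =
      K * (Pm * It + Pt * Im) * ((Pm + b) * (1 + Pm * Pt) - J * (Pm * It + Pt * Im)) +
        (Pm + b) * Im * (Pt * Im - b * It) := by
    ring
  have hd₂ : K ^ 2 * (Pt * Im ^ 2 - b * It * Im) = K ^ 2 * Im * (Pt * Im - b * It) := by
    ring
  rw [hξ, hd₂, mul_pos_iff_of_pos_left hK,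
    mul_nonneg_iff_of_pos_left (by positivity : 0 < K ^ 2 * Im),
    mul_nonneg_iff_of_pos_left (by positivity : 0 < K ^ 2),
    lt_div_iff₀ hα, le_div_iff₀ hα, lt_div_iff₀ hIt, le_div_iff₀ hIt,
    pos_combination_iff hp hq]
  simp only [sub_pos, sub_nonneg]
end

section
/- The three conditions ξ > 0, d₄ˢ ≥ 0, and d₆ˢ ≥ 0 hold simultaneously if and only if either [J < (P_m+b)·(ΔK·P_m·P_t+K)/(α·ΔK) and b < P_t·I_m/I_t and K_d ≤ K_d^max] or [J ≤ (P_m+b)·(ΔK·P_m·P_t+K)/(α·ΔK) and b < P_t·I_m/I_t and K_d < K_d^max], where ΔK = K − K_d and K_d^max = K·β/(β+α·K). -/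
/-!
Write `a = α = Pm It + Pt Im`, `p = Pm + b`, `D = K - Kd`, `β = Pt Im² - b Im It` and
`η = Pm² Pt + Pm Pt b - J a`; let `ξ`, `d₄`, `d₆` be the three quantities on the left of the
equivalence, so that `d₄ = K X` with `X = D β - a K Kd` and `d₆ = K Y` with `Y = D η + K p`.
The proof rests on the identities `ξ = K (a K (p + η) + p β)` and
`D (a K (p + η) + p β) = a K Y + p X`.

* If `X, Y ≥ 0`, then `D ≠ 0` because `X ≥ 0` forces `D β ≥ a K Kd > 0`; and `D < 0` is
  incompatible with `ξ > 0`, since the left side of the identity would be negative and the right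
  side nonnegative. Hence `D > 0` and `β > 0`.
* When `D > 0` and `X, Y ≥ 0`, the identity shows that `ξ > 0` exactly when one of `X`, `Y` is
  strictly positive, which is the disjunction in the theorem.

Clearing denominators turns the bounds on `J`, `b`, `Kd` into conditions on `Y`, `β`, `X`.
-/

/-- The sign analysis behind the theorem, in terms of the aggregated quantities
`a = α`, `p = Pm + b`, `β` and `η`. -/
lemma spring_core {a p K Kd β η : ℝ} (ha : 0 < a) (hp : 0 < p) (hK : 0 < K) (hKd : 0 < Kd) :
    (0 < a * K * (p + η) + p * β ∧ 0 ≤ (K - Kd) * β - a * K * Kd ∧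
        0 ≤ (K - Kd) * η + K * p) ↔
      0 < K - Kd ∧ 0 < β ∧
        ((0 < (K - Kd) * η + K * p ∧ 0 ≤ (K - Kd) * β - a * K * Kd) ∨
          (0 ≤ (K - Kd) * η + K * p ∧ 0 < (K - Kd) * β - a * K * Kd)) := by
  have key : (K - Kd) * (a * K * (p + η) + p * β) =
      a * K * ((K - Kd) * η + K * p) + p * ((K - Kd) * β - a * K * Kd) := by ring
  have haK : 0 < a * K := mul_pos ha hK
  constructor
  · rintro ⟨hξ, hX, hY⟩
    have hβD : 0 < (K - Kd) * β := by
      have := mul_pos haK hKd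
      linarith
    have hD : 0 < K - Kd := by
      have h0 : 0 ≤ (K - Kd) * (a * K * (p + η) + p * β) := by
        rw [key]; positivity
      have h1 : 0 ≤ K - Kd := nonneg_of_mul_nonneg_left h0 hξ
      exact lt_of_le_of_ne h1 (fun h => by rw [← h] at hβD; simp at hβD)
    refine ⟨hD, pos_of_mul_pos_right hβD hD.le, ?_⟩
    rcases hY.lt_or_eq with hY' | hY'
    · exact Or.inl ⟨hY', hX⟩
    · refine Or.inr ⟨hY, ?_⟩
      have h2 := mul_pos hD hξ
      rw [key, ← hY', mul_zero, zero_add] at h2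
      exact pos_of_mul_pos_right h2 hp.le
  · rintro ⟨hD, -, h⟩
    have hpos : 0 < (K - Kd) * (a * K * (p + η) + p * β) := by
      rw [key]
      rcases h with ⟨hY, hX⟩ | ⟨hY, hX⟩ <;> positivity
    refine ⟨pos_of_mul_pos_right hpos hD.le, ?_⟩
    rcases h with ⟨hY, hX⟩ | ⟨hY, hX⟩
    · exact ⟨hX, hY.le⟩
    · exact ⟨hX.le, hY⟩

/-- Necessary and sufficient conditions for passive pure spring rendering:
`ξ > 0 ∧ d₄ˢ ≥ 0 ∧ d₆ˢ ≥ 0` holds iff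
`[J < (Pm+b)(ΔK·Pm·Pt+K)/(α·ΔK) ∧ b < Pt·Im/It ∧ Kd ≤ Kd^max] ∨
 [J ≤ (Pm+b)(ΔK·Pm·Pt+K)/(α·ΔK) ∧ b < Pt·Im/It ∧ Kd < Kd^max]`,
where `ΔK = K − Kd` and `Kd^max = K·β/(β+α·K)` with `β = Pt·Im² − b·Im·It`
and `α = Pm·It + Pt·Im`. -/
theorem spring_passivity_iff
    (J b K Kd Pm Im Pt It : ℝ)
    (hJ : 0 < J) (hb : 0 < b) (hK : 0 < K) (hKd : 0 < Kd)
    (hPm : 0 < Pm) (hIm : 0 < Im) (hPt : 0 < Pt) (hIt : 0 < It) :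
    (0 < K * ((Pm * It + Pt * Im) * (Pm + b) * (K + (K * Pm * Pt + Im)) -
          Im * It * (Pm + b) ^ 2 - J * K * (Pm * It + Pt * Im) ^ 2) ∧
      0 ≤ K * ((K - Kd) * (Pt * Im ^ 2 - b * Im * It) - (Pm * It + Pt * Im) * K * Kd) ∧
      0 ≤ K * ((K - Kd) * (Pm ^ 2 * Pt + Pm * Pt * b - J * (Pm * It + Pt * Im)) +
          K * (Pm + b))) ↔
    ((J < (Pm + b) * ((K - Kd) * Pm * Pt + K) / ((Pm * It + Pt * Im) * (K - Kd)) ∧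
        b < Pt * Im / It ∧
        Kd ≤ K * (Pt * Im ^ 2 - b * Im * It) /
          ((Pt * Im ^ 2 - b * Im * It) + (Pm * It + Pt * Im) * K)) ∨
      (J ≤ (Pm + b) * ((K - Kd) * Pm * Pt + K) / ((Pm * It + Pt * Im) * (K - Kd)) ∧
        b < Pt * Im / It ∧
        Kd < K * (Pt * Im ^ 2 - b * Im * It) /
          ((Pt * Im ^ 2 - b * Im * It) + (Pm * It + Pt * Im) * K))) := by
  have ha : 0 < Pm * It + Pt * Im := by positivity
  have hp : 0 < Pm + b := by positivity
  have core := spring_core (β := Pt * Im ^ 2 - b * Im * It)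
    (η := Pm ^ 2 * Pt + Pm * Pt * b - J * (Pm * It + Pt * Im)) ha hp hK hKd
  rw [mul_pos_iff_of_pos_left hK, mul_nonneg_iff_of_pos_left hK, mul_nonneg_iff_of_pos_left hK]
  -- `α - It (Pm + b) = β / Im` converts the bracket of `ξ` into the form used in `spring_core`.
  have hξ : (Pm * It + Pt * Im) * (Pm + b) * (K + (K * Pm * Pt + Im)) -
          Im * It * (Pm + b) ^ 2 - J * K * (Pm * It + Pt * Im) ^ 2 =
      (Pm * It + Pt * Im) * K *
          (Pm + b + (Pm ^ 2 * Pt + Pm * Pt * b - J * (Pm * It + Pt * Im))) +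
        (Pm + b) * (Pt * Im ^ 2 - b * Im * It) := by ring
  rw [hξ, core]
  have hβ : b < Pt * Im / It ↔ 0 < Pt * Im ^ 2 - b * Im * It := by
    rw [lt_div_iff₀ hIt, ← sub_pos,
      show Pt * Im ^ 2 - b * Im * It = Im * (Pt * Im - b * It) by ring,
      mul_pos_iff_of_pos_left hIm]
  rw [hβ]
  generalize hB : Pt * Im ^ 2 - b * Im * It = β
  have hJlt (hD : 0 < K - Kd) :
      J < (Pm + b) * ((K - Kd) * Pm * Pt + K) / ((Pm * It + Pt * Im) * (K - Kd)) ↔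
        0 < (K - Kd) * (Pm ^ 2 * Pt + Pm * Pt * b - J * (Pm * It + Pt * Im)) + K * (Pm + b) := by
    rw [lt_div_iff₀ (mul_pos ha hD), ← sub_pos]
    ring_nf
  have hJle (hD : 0 < K - Kd) :
      J ≤ (Pm + b) * ((K - Kd) * Pm * Pt + K) / ((Pm * It + Pt * Im) * (K - Kd)) ↔
        0 ≤ (K - Kd) * (Pm ^ 2 * Pt + Pm * Pt * b - J * (Pm * It + Pt * Im)) + K * (Pm + b) := by
    rw [le_div_iff₀ (mul_pos ha hD), ← sub_nonneg]
    ring_nf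
  generalize Pm * It + Pt * Im = a at *
  have hKdlt (h : 0 < β) : Kd < K * β / (β + a * K) ↔ 0 < (K - Kd) * β - a * K * Kd := by
    rw [lt_div_iff₀ (by positivity), ← sub_pos]
    ring_nf
  have hKdle (h : 0 < β) : Kd ≤ K * β / (β + a * K) ↔ 0 ≤ (K - Kd) * β - a * K * Kd := by
    rw [le_div_iff₀ (by positivity), ← sub_nonneg]
    ring_nf
  -- The bound on `Kd` already gives `Kd < K`, so the division by `K - Kd` is by a positive number.
  have hDpos (h : 0 < β) (hX : 0 ≤ (K - Kd) * β - a * K * Kd) : 0 < K - Kd := by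
    have h1 : 0 < a * K * Kd := by positivity
    have h2 : 0 < (K - Kd) * β := by linarith
    exact pos_of_mul_pos_left h2 h.le
  constructor
  · rintro ⟨hD, h, ⟨hY, hX⟩ | ⟨hY, hX⟩⟩
    · exact Or.inl ⟨(hJlt hD).2 hY, h, (hKdle h).2 hX⟩
    · exact Or.inr ⟨(hJle hD).2 hY, h, (hKdlt h).2 hX⟩
  · rintro (⟨hj, h, hk⟩ | ⟨hj, h, hk⟩)
    · have hX := (hKdle h).1 hk
      have hD := hDpos h hX
      exact ⟨hD, h, Or.inl ⟨(hJlt hD).1 hj, hX⟩⟩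
    · have hX := (hKdlt h).1 hk
      have hD := hDpos h hX.le
      exact ⟨hD, h, Or.inr ⟨(hJle hD).1 hj, hX⟩⟩
end

section
/- Suppose the torque integral gain is zero, I_t = 0, while J, b, K, P_m, P_t, I_m are positive. Then the conjunction of the passivity conditions for null impedance rendering (ξ > 0, d₂ ≥ 0 and d₄ ≥ 0, with α = P_t·I_m, γ = K·P_m·P_t + I_m) holds if and only if J ≤ (P_m+b)·(1+P_m·P_t)/(P_t·I_m). -/
/-- With zero torque integral gain (`It = 0`), the passivity conditions for null
impedance rendering (`ξ > 0`, `d₂ ≥ 0` and `d₄ ≥ 0`, with `α = Pt·Im` and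
`γ = K·Pm·Pt + Im`) hold iff `J ≤ (Pm+b)·(1+Pm·Pt)/(Pt·Im)`. -/
theorem null_impedance_passivity_iff_no_torque_integrator
    (J b K Pm Im Pt It : ℝ)
    (hJ : 0 < J) (hb : 0 < b) (hK : 0 < K)
    (hPm : 0 < Pm) (hIm : 0 < Im) (hPt : 0 < Pt) (hIt : It = 0) :
    (0 < K * ((Pm * It + Pt * Im) * (Pm + b) * (K + (K * Pm * Pt + Im)) -
          Im * It * (Pm + b) ^ 2 - J * K * (Pm * It + Pt * Im) ^ 2) ∧
      0 ≤ K ^ 2 * (Pt * Im ^ 2 - b * It * Im) ∧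
      0 ≤ K ^ 2 * ((Pm + b) * (1 + Pm * Pt) - J * (Pm * It + Pt * Im))) ↔
    J ≤ (Pm + b) * (1 + Pm * Pt) / (Pt * Im) := by
  subst hIt
  rw [le_div_iff₀ (by positivity)]
  constructor
  · rintro ⟨-, -, h⟩
    have := nonneg_of_mul_nonneg_right h (by positivity)
    linarith
  · intro h
    have h4 : 0 ≤ (Pm + b) * (1 + Pm * Pt) - J * (Pt * Im) := by linarith
    refine ⟨?_, by simp only [mul_zero, zero_mul, sub_zero]; positivity, ?_⟩
    -- For `It = 0`, `ξ = K·α·(d₄ / K + (Pm + b)·Im)`, so `d₄ ≥ 0` already forces `ξ > 0`.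
    · have : 0 < K * (Pt * Im) *
          (K * ((Pm + b) * (1 + Pm * Pt) - J * (Pt * Im)) + (Pm + b) * Im) := by positivity
      linear_combination this
    · simp only [mul_zero, zero_add]
      positivity
end
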